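/- arXiv:1303.7146 — 3 statements merged into one kernel-verified Lean document; each statement's English description precedes it below -/
import Mathlib

section
/- Let (X, δ) be a bounded hyperconvex diversity and let (H_i)_{i∈I} be a family of subsets of X directed by reverse inclusion (i.e., H_i ⊆ H_j whenever j ≤ i) such that for each i ∈ I the restriction (H_i, δ) is a hyperconvex diversity. Then the intersection ⋂_{i∈I} H_i is nonempty. -/
/-- A diversity on `X`. -/
structure Diversity (X : Type*) [DecidableEq X] where
  delta : Finset X → ℝ
  nonneg : ∀ A, 0 ≤ delta A
  eq_zero_iff : ∀ A, delta A = 0 ↔ A.card ≤ 1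
  triangle : ∀ A B C : Finset X, B.Nonempty →
    delta (A ∪ C) ≤ delta (A ∪ B) + delta (B ∪ C)

namespace Diversity

variable {X : Type*} [DecidableEq X]

/-- Hyperconvexity of a diversity. -/
def Hyperconvex (D : Diversity X) : Prop :=
  ∀ r : Finset X → ℝ, r ∅ = 0 →
    (∀ 𝒜 : Finset (Finset X), D.delta (𝒜.sup id) ≤ ∑ A ∈ 𝒜, r A) →
    ∃ z : X, ∀ Y : Finset X, D.delta (insert z Y) ≤ r Y

/-- A diversity is bounded if its values are uniformly bounded above. -/
def Bounded (D : Diversity X) : Prop :=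
  ∃ M : ℝ, 0 ≤ M ∧ ∀ A : Finset X, D.delta A ≤ M

/-- The restriction of a diversity to a subset `H ⊆ X`. -/
def restrict (D : Diversity X) (H : Set X) : Diversity H where
  delta A := D.delta (A.image Subtype.val)
  nonneg A := D.nonneg _
  eq_zero_iff A := by
    rw [D.eq_zero_iff, Finset.card_image_of_injective A Subtype.val_injective]
  triangle A B C hB := by
    have h := D.triangle (A.image Subtype.val) (B.image Subtype.val) (C.image Subtype.val)
      (hB.image _)
    simpa [Finset.image_union] using h

end Diversity

/-!
Systems of conditions `δ({z} ∪ Y) ≤ c` on `z` generalise systems of balls, and a nonempty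
intersection of balls centered in a hyperconvex set is again hyperconvex. For a decreasing chain
of hyperconvex sets `H i`, one can therefore follow Baillon: Zorn's lemma gives a minimal
decreasing family of nonempty intersections `A i ⊆ H i` of balls centered in `H i`. If the
diameter `m` of `A k` were positive, boundedness of `δ` would give a constant `c < m` with
`δ(F) ≤ |F| c` for all finite `F ⊆ A k`, so hyperconvexity would produce, for every `i ≥ k`,
a point of `A i` within distance `c` of all of `A i`; restricting the family to such points
contradicts minimality. Hence every `A k` is a single point, and this point lies in all
`H i`. Directed families are reduced to chains by Iwamura's transfinite induction on the
cardinality of the index set.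
-/

section DirectedInfimum

open Cardinal

universe u

variable {α : Type*}

theorem exists_antitone_comp_finset_of_directed [Preorder α] {ι : Type*} [Nonempty ι] {f : ι → α}
    (hf : Directed (· ≥ ·) f) :
    ∃ g : Finset ι → ι, Antitone (f ∘ g) ∧ ∀ F, ∀ i ∈ F, f (g F) ≤ f i := by
  classical
  choose u hu using fun F : Finset ι => hf.finset_le F
  let g : Finset ι → ι := fun F => F.strongInduction (p := fun _ => ι)
    fun F ih => u (F ∪ F.ssubsets.attach.image fun G => ih G.1 (Finset.mem_ssubsets.1 G.2))
  have g_eq (F) : g F = u (F ∪ F.ssubsets.attach.image fun G => g G.1) :=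
    Finset.strongInduction_eq (p := fun _ => ι) _ F
  refine ⟨g, fun F G hFG => ?_, fun F i hi => ?_⟩
  · obtain rfl | hlt := hFG.eq_or_ssubset
    · exact le_rfl
    · simp only [Function.comp_apply, g_eq G]
      exact hu _ _ (Finset.mem_union_right _
        (Finset.mem_image.2 ⟨⟨F, Finset.mem_ssubsets.2 hlt⟩, Finset.mem_attach _ _, rfl⟩))
  · rw [g_eq]
    exact hu _ _ (Finset.mem_union_left _ hi)

theorem iInf_finset_eq_iInf_Iic [CompleteLattice α] {ι : Type*} [LinearOrder ι] [Nonempty ι]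
    (g : Finset ι → α) :
    ⨅ F, g F = ⨅ a : ι, ⨅ F : Finset (Set.Iic a), g (F.map (.subtype _)) := by
  refine le_antisymm (le_iInf₂ fun a F => iInf_le g _) (le_iInf fun F => ?_)
  obtain ⟨a, ha⟩ := F.exists_le
  refine (iInf₂_le a (F.subtype (· ∈ Set.Iic a))).trans_eq (congrArg g ?_)
  exact Finset.subtype_map_of_mem ha

/-- Induct on the cardinality of `ι`: along a well-order of minimal type, every initial segment
`Set.Iic a` has smaller cardinality than `ι`. -/
theorem iInf_finset_of_antitone_iInf [CompleteLattice α] {P : α → Prop}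
    (hP : ∀ {ι : Type u} [LinearOrder ι] [Nonempty ι] (f : ι → α),
      Antitone f → (∀ i, P (f i)) → P (⨅ i, f i))
    {ι : Type u} {g : Finset ι → α} (hg : Antitone g) (hPg : ∀ F, P (g F)) :
    P (⨅ F, g F) := by
  induction hκ : #ι using WellFoundedLT.induction generalizing ι with
  | ind κ ih =>
    obtain hfin | hinf := finite_or_infinite ι
    · have := Fintype.ofFinite ι
      have iInf_eq : ⨅ F, g F = g Finset.univ :=
        le_antisymm (iInf_le g _) (le_iInf fun F => hg F.subset_univ)
      exact iInf_eq ▸ hPg _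
    · obtain ⟨_, _, hord⟩ := exists_ord_eq_type_lt ι
      rw [iInf_finset_eq_iInf_Iic]
      refine hP _ (fun a b hab => le_iInf fun F => ?_) fun a => ?_
      · let inclusion := Set.embeddingOfSubset _ _ (Set.Iic_subset_Iic.2 hab)
        refine (iInf_le _ (F.map inclusion)).trans_eq ?_
        rw [Finset.map_map]
        rfl
      · exact ih _ (hκ ▸ mk_Iic_lt a hord (aleph0_le_mk ι))
          (fun F G hFG => hg (Finset.map_subset_map.2 hFG)) (fun F => hPg _) rfl

theorem iInf_of_directed_of_antitone_iInf [CompleteLattice α] {P : α → Prop}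
    (hP : ∀ {ι : Type u} [LinearOrder ι] [Nonempty ι] (f : ι → α),
      Antitone f → (∀ i, P (f i)) → P (⨅ i, f i))
    {ι : Type u} [Nonempty ι] {f : ι → α} (hf : Directed (· ≥ ·) f) (hPf : ∀ i, P (f i)) :
    P (⨅ i, f i) := by
  obtain ⟨g, hg, hgf⟩ := exists_antitone_comp_finset_of_directed hf
  have iInf_eq : ⨅ i, f i = ⨅ F, f (g F) :=
    le_antisymm (le_iInf fun F => iInf_le f _)
      (le_iInf fun i => (iInf_le _ {i}).trans (hgf _ i (Finset.mem_singleton_self i)))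
  exact iInf_eq ▸ iInf_finset_of_antitone_iInf hP hg fun F => hPf _

end DirectedInfimum

theorem le_sum_csInf {ι : Type*} {s : Finset ι} {V : ι → Set ℝ} (hV : ∀ i ∈ s, (V i).Nonempty)
    {a : ℝ} (h : ∀ c : ι → ℝ, (∀ i ∈ s, c i ∈ V i) → a ≤ ∑ i ∈ s, c i) :
    a ≤ ∑ i ∈ s, sInf (V i) := by
  classical
  induction s using Finset.induction_on generalizing a with
  | empty => simpa using h 0
  | insert i s hi ih =>
    rw [Finset.forall_mem_insert] at hV
    rw [Finset.sum_insert hi, ← sub_le_iff_le_add]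
    refine le_csInf hV.1 fun b hb => sub_le_comm.1 (ih hV.2 fun c hc => ?_)
    have hne (j) (hj : j ∈ s) : j ≠ i := ne_of_mem_of_not_mem hj hi
    have hb_sum := h (Function.update c i b) (by
      simp only [Finset.forall_mem_insert, Function.update_self]
      exact ⟨hb, fun j hj => by simpa [hne j hj] using hc j hj⟩)
    rw [Finset.sum_insert hi, Function.update_self, Finset.sum_update_of_notMem hi] at hb_sum
    linarith

namespace Diversity

variable {X : Type*} [DecidableEq X] {D : Diversity X} {H A : Set X} {K : Set (Finset X × ℝ)}

section Delta

variable (D)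

theorem delta_empty : D.delta ∅ = 0 := (D.eq_zero_iff _).2 (by simp)

theorem delta_singleton (x : X) : D.delta {x} = 0 := (D.eq_zero_iff _).2 (by simp)

theorem delta_le_delta_insert (z : X) (A : Finset X) : D.delta A ≤ D.delta (insert z A) := by
  simpa [delta_singleton, Finset.union_comm A, ← Finset.insert_eq] using
    D.triangle A {z} ∅ (by simp)

theorem delta_union_le_of_mem {y : X} {A : Finset X} (hy : y ∈ A) (B : Finset X) :
    D.delta (A ∪ B) ≤ D.delta A + D.delta (insert y B) := by
  simpa [Finset.union_eq_left.2 (Finset.singleton_subset_iff.2 hy), ← Finset.insert_eq] using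
    D.triangle A {y} B (by simp)

theorem delta_insert_biUnion_le {ι : Type*} (z : X) (s : Finset ι) (f : ι → Finset X) :
    D.delta (insert z (s.biUnion f)) ≤ ∑ i ∈ s, D.delta (insert z (f i)) := by
  classical
  induction s using Finset.induction_on with
  | empty => simp [delta_singleton]
  | insert i s hi ih =>
    rw [Finset.biUnion_insert, Finset.sum_insert hi, ← Finset.insert_union]
    exact (D.delta_union_le_of_mem (Finset.mem_insert_self z _) _).trans (by gcongr)

end Delta

theorem delta_le_card_sub_one_mul {m : ℝ} {F : Finset X} (hne : F.Nonempty)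
    (hm : ∀ x ∈ F, ∀ y ∈ F, D.delta {x, y} ≤ m) : D.delta F ≤ (F.card - 1) * m := by
  obtain ⟨z, hz⟩ := hne
  calc D.delta F = D.delta (insert z ((F.erase z).biUnion fun y => {y})) := by
        rw [Finset.biUnion_singleton_eq_self, Finset.insert_erase hz]
    _ ≤ ∑ y ∈ F.erase z, D.delta {z, y} := D.delta_insert_biUnion_le z _ _
    _ ≤ (F.erase z).card • m :=
        Finset.sum_le_card_nsmul _ _ _ fun y hy => hm z hz y (Finset.mem_of_mem_erase hy)
    _ = (F.card - 1) * m := by rw [nsmul_eq_mul, Finset.cast_card_erase_of_mem hz]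

/-- With `M ≤ k m` for a bound `M` of `δ`, the constant `c = m k / (k + 1)` works: the bound
`δ(F) ≤ (|F| - 1) m` suffices if `|F| ≤ k + 1`, and `δ(F) ≤ M` if `|F| ≥ k + 1`. -/
theorem Bounded.exists_lt_forall_delta_le_card_mul (hB : D.Bounded) {m : ℝ} (hm : 0 < m)
    (hA : ∀ x ∈ A, ∀ y ∈ A, D.delta {x, y} ≤ m) :
    ∃ c < m, ∀ F : Finset X, ↑F ⊆ A → D.delta F ≤ F.card * c := by
  obtain ⟨M, -, hM⟩ := hB
  obtain ⟨k, hk⟩ := Archimedean.arch M hm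
  rw [nsmul_eq_mul] at hk
  have hk_pos : (0 : ℝ) < k + 1 := by positivity
  refine ⟨m * k / (k + 1), by rw [div_lt_iff₀ hk_pos]; linarith, fun F hF => ?_⟩
  obtain rfl | hne := F.eq_empty_or_nonempty
  · simp [delta_empty]
  rw [← mul_div_assoc, le_div_iff₀ hk_pos]
  obtain hsmall | hlarge := le_total (F.card : ℝ) (k + 1)
  · have delta_le := delta_le_card_sub_one_mul hne fun x hx y hy => hA x (hF hx) y (hF hy)
    calc D.delta F * (k + 1) ≤ (F.card - 1) * m * (k + 1) := by gcongr
      _ ≤ F.card * (m * k) := by linarith [mul_le_mul_of_nonneg_left hsmall hm.le]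
  · calc D.delta F * (k + 1) ≤ k * m * F.card := by
          gcongr
          exact (hM F).trans hk
      _ = F.card * (m * k) := by ring

/-- The intersection of the balls `{z | δ({z} ∪ Y) ≤ c}` with center `Y` and radius `c`, for
`(Y, c)` ranging over `K`. -/
def ballInter (D : Diversity X) (K : Set (Finset X × ℝ)) : Set X :=
  {z | ∀ p ∈ K, D.delta (insert z p.1) ≤ p.2}

/-- The condition on the radii in the definition of hyperconvexity, for a system of balls given by
its set `K` of pairs (center, radius). The same center may occur with several radii. -/
def Feasible (D : Diversity X) (K : Set (Finset X × ℝ)) : Prop :=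
  ∀ F : Finset (Finset X × ℝ), ↑F ⊆ K → D.delta (F.biUnion Prod.fst) ≤ ∑ p ∈ F, p.2

/-- Hyperconvexity of a subset `H`, with the function `r` on finite sets replaced by a set of pairs
(center, radius), so that systems of balls may be partial and can be united. -/
def HyperconvexOn (D : Diversity X) (H : Set X) : Prop :=
  ∀ K : Set (Finset X × ℝ), (∀ p ∈ K, ↑p.1 ⊆ H) → D.Feasible K → (H ∩ D.ballInter K).Nonempty

/-- Admissible subsets of `H`: intersections with `H` of balls centered in `H`. -/
def AdmissibleIn (D : Diversity X) (H A : Set X) : Prop :=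
  ∃ K : Set (Finset X × ℝ), (∀ p ∈ K, ↑p.1 ⊆ H) ∧ A = H ∩ D.ballInter K

theorem ballInter_anti {L : Set (Finset X × ℝ)} (h : K ⊆ L) : D.ballInter L ⊆ D.ballInter K :=
  fun _ hz p hp => hz p (h hp)

theorem ballInter_union (K L : Set (Finset X × ℝ)) :
    D.ballInter (K ∪ L) = D.ballInter K ∩ D.ballInter L := by
  ext z
  simp only [ballInter, Set.mem_union, or_imp, forall_and, Set.mem_inter_iff, Set.mem_ofPred_eq]

theorem ballInter_iUnion {ι : Sort*} (K : ι → Set (Finset X × ℝ)) :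
    D.ballInter (⋃ i, K i) = ⋂ i, D.ballInter (K i) := by
  ext z
  simp only [ballInter, Set.mem_iUnion, Set.mem_iInter, Set.mem_ofPred_eq, forall_exists_index]
  exact forall_comm

theorem feasible_empty : D.Feasible ∅ := by
  intro F hF
  obtain rfl : F = ∅ := by simpa using hF
  simp [delta_empty]

theorem feasible_of_forall_finset_ballInter_nonempty
    (h : ∀ F : Finset (Finset X × ℝ), ↑F ⊆ K → (D.ballInter F).Nonempty) : D.Feasible K := by
  intro F hF
  obtain ⟨z, hz⟩ := h F hF
  calc D.delta (F.biUnion Prod.fst) ≤ D.delta (insert z (F.biUnion Prod.fst)) :=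
        D.delta_le_delta_insert z _
    _ ≤ ∑ p ∈ F, D.delta (insert z p.1) := D.delta_insert_biUnion_le z F _
    _ ≤ ∑ p ∈ F, p.2 := Finset.sum_le_sum hz

theorem feasible_of_ballInter_nonempty (h : (D.ballInter K).Nonempty) : D.Feasible K :=
  feasible_of_forall_finset_ballInter_nonempty fun _ hF => h.mono (ballInter_anti hF)

theorem Feasible.radius_nonneg (hK : D.Feasible K) {p : Finset X × ℝ} (hp : p ∈ K) : 0 ≤ p.2 := by
  simpa using (D.nonneg _).trans (hK {p} (by simpa using hp))

theorem Feasible.union {L : Set (Finset X × ℝ)} (hK : D.Feasible K) (hL : D.Feasible L)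
    (h : ∀ q ∈ L, ↑q.1 ⊆ D.ballInter K) : D.Feasible (K ∪ L) := by
  intro F hF
  obtain ⟨F₀, F₁, rfl, hF₀, hF₁⟩ := Finset.subset_union_elim hF
  have hdisj : Disjoint F₀ F₁ :=
    Finset.disjoint_left.2 fun p hp₀ hp₁ => (hF₁ hp₁).2 (hF₀ hp₀)
  have h₀ := hK F₀ hF₀
  have h₁ := hL F₁ fun p hp => (hF₁ hp).1
  rw [Finset.union_biUnion, Finset.sum_union hdisj]
  obtain hempty | ⟨y, hy⟩ := (F₁.biUnion Prod.fst).eq_empty_or_nonempty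
  · rw [hempty, Finset.union_empty]
    linarith [(D.nonneg _).trans h₁]
  · obtain ⟨q, hq, hyq⟩ := Finset.mem_biUnion.1 hy
    have hy_ball : y ∈ D.ballInter K := h q (hF₁ hq).1 hyq
    calc D.delta (F₀.biUnion Prod.fst ∪ F₁.biUnion Prod.fst)
        ≤ D.delta (F₁.biUnion Prod.fst) + D.delta (insert y (F₀.biUnion Prod.fst)) := by
          rw [Finset.union_comm]
          exact D.delta_union_le_of_mem hy _
      _ ≤ ∑ p ∈ F₁, p.2 + ∑ p ∈ F₀, p.2 := by
          gcongr
          exact (D.delta_insert_biUnion_le y F₀ _).trans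
            (Finset.sum_le_sum fun p hp => hy_ball p (hF₀ hp))
      _ = ∑ p ∈ F₀, p.2 + ∑ p ∈ F₁, p.2 := add_comm _ _

theorem Feasible.insert_empty_zero (hK : D.Feasible K) : D.Feasible (insert (∅, 0) K) := by
  intro F hF
  have biUnion_erase : (F.erase (∅, 0)).biUnion Prod.fst = F.biUnion Prod.fst := by
    ext x
    simp only [Finset.mem_biUnion, Finset.mem_erase]
    grind
  simpa [biUnion_erase, Finset.sum_erase F (f := Prod.snd) (a := ((∅ : Finset X), (0 : ℝ))) rfl]
    using hK (F.erase (∅, 0)) (by simpa using hF)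

theorem Feasible.union_of_le_radius (hK : D.Feasible K) {L : Set (Finset X × ℝ)} {M : ℝ}
    (hM : ∀ A, D.delta A ≤ M) (hL : ∀ p ∈ L, M ≤ p.2) : D.Feasible (K ∪ L) := by
  intro F hF
  by_cases hFK : ↑F ⊆ K
  · exact hK F hFK
  obtain ⟨p, hpF, hpK⟩ := Set.not_subset.1 hFK
  have radius_nonneg : ∀ q ∈ F, 0 ≤ q.2 := fun q hq => (hF hq).elim hK.radius_nonneg
    fun hqL => ((D.nonneg ∅).trans (hM ∅)).trans (hL q hqL)
  calc D.delta (F.biUnion Prod.fst) ≤ M := hM _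
    _ ≤ p.2 := hL p ((hF hpF).resolve_left hpK)
    _ ≤ ∑ q ∈ F, q.2 := Finset.single_le_sum radius_nonneg hpF

theorem restrict_delta_sup_le_sum_iff {c : Finset H → ℝ} {𝒜 : Finset (Finset H)} :
    (D.restrict H).delta (𝒜.sup id) ≤ ∑ A ∈ 𝒜, c A ↔
      D.delta ((𝒜.image fun A => (A.image Subtype.val, c A)).biUnion Prod.fst) ≤
        ∑ p ∈ 𝒜.image fun A => (A.image Subtype.val, c A), p.2 := by
  have pair_injective : Function.Injective fun A : Finset H => (A.image Subtype.val, c A) :=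
    fun _ _ h => Finset.image_injective Subtype.val_injective (Prod.ext_iff.1 h).1
  simp only [restrict, Finset.sum_image pair_injective.injOn, Finset.image_biUnion,
    Finset.sup_eq_biUnion, Finset.biUnion_image, id]

theorem HyperconvexOn.hyperconvex_restrict (h : D.HyperconvexOn H) :
    (D.restrict H).Hyperconvex := by
  intro r _ hr
  obtain ⟨z, hzH, hz⟩ := h (Set.range fun A : Finset H => (A.image Subtype.val, r A))
    (by rintro _ ⟨A, rfl⟩; simp) fun F hF => by
      rw [← Set.image_univ] at hF
      obtain ⟨𝒜, -, rfl⟩ := Finset.subset_set_image_iff.1 hF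
      exact restrict_delta_sup_le_sum_iff.1 (hr 𝒜)
  refine ⟨⟨z, hzH⟩, fun Y => ?_⟩
  simpa [restrict, Finset.image_insert] using hz _ ⟨Y, rfl⟩

/-- A partial system of balls is completed to a function `r` by allowing the bound `M` of `δ` as a
radius at every center, and `0` at the center `∅`. -/
theorem Hyperconvex.hyperconvexOn (hB : D.Bounded) (h : (D.restrict H).Hyperconvex) :
    D.HyperconvexOn H := by
  classical
  intro K hKH hK
  obtain ⟨M, -, hM⟩ := hB
  let L : Set (Finset X × ℝ) := insert (∅, 0) K ∪ {p | p.2 = M}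
  have hL : D.Feasible L := hK.insert_empty_zero.union_of_le_radius hM fun _ hp => hp.ge
  let radii (A : Finset H) : Set ℝ := {c | (A.image Subtype.val, c) ∈ L}
  have radii_lower (A) : 0 ∈ lowerBounds (radii A) := fun _ hc => hL.radius_nonneg hc
  have radii_empty : IsLeast (radii ∅) 0 := ⟨Or.inl (Or.inl rfl), radii_lower ∅⟩
  obtain ⟨z, hz⟩ := h (fun A => sInf (radii A)) radii_empty.csInf_eq fun 𝒜 =>
    le_sum_csInf (fun A _ => ⟨M, Or.inr rfl⟩) fun c hc => by
      refine restrict_delta_sup_le_sum_iff.2 (hL _ fun p hp => ?_)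
      obtain ⟨A, hA, rfl⟩ := Finset.mem_image.1 hp
      exact hc A hA
  refine ⟨z, z.2, fun p hp => ?_⟩
  have image_subtype : (p.1.subtype (· ∈ H)).image Subtype.val = p.1 := by
    simpa [Finset.map_eq_image] using Finset.subtype_map_of_mem (hKH p hp)
  have hp_radii : p.2 ∈ radii (p.1.subtype (· ∈ H)) := by
    simp only [radii, Set.mem_ofPred_eq, image_subtype]
    exact Or.inl (Or.inr hp)
  calc D.delta (insert z.1 p.1) = (D.restrict H).delta (insert z (p.1.subtype (· ∈ H))) := by
        simp only [restrict, Finset.image_insert, image_subtype]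
    _ ≤ sInf (radii (p.1.subtype (· ∈ H))) := hz _
    _ ≤ p.2 := csInf_le ⟨0, radii_lower _⟩ hp_radii

theorem HyperconvexOn.nonempty (h : D.HyperconvexOn H) : H.Nonempty :=
  (h ∅ (by simp) feasible_empty).mono Set.inter_subset_left

theorem HyperconvexOn.inter_ballInter (h : D.HyperconvexOn H) (hKH : ∀ p ∈ K, ↑p.1 ⊆ H)
    (hK : D.Feasible K) : D.HyperconvexOn (H ∩ D.ballInter K) := by
  intro L hLA hL
  rw [Set.inter_assoc, ← ballInter_union]
  exact h (K ∪ L) (fun p hp => hp.elim (hKH p) fun hpL => (hLA p hpL).trans Set.inter_subset_left)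
    (hK.union hL fun q hq => (hLA q hq).trans Set.inter_subset_right)

theorem HyperconvexOn.of_admissibleIn (h : D.HyperconvexOn H) (hA : D.AdmissibleIn H A)
    (hne : A.Nonempty) : D.HyperconvexOn A := by
  obtain ⟨K, hKH, rfl⟩ := hA
  exact h.inter_ballInter hKH (feasible_of_ballInter_nonempty (hne.mono Set.inter_subset_right))

theorem AdmissibleIn.subset (h : D.AdmissibleIn H A) : A ⊆ H := by
  obtain ⟨K, -, rfl⟩ := h
  exact Set.inter_subset_left

theorem admissibleIn_self : D.AdmissibleIn H H :=
  ⟨∅, by simp, by simp [ballInter]⟩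

theorem AdmissibleIn.inter_ballInter (h : D.AdmissibleIn H A) (hKH : ∀ p ∈ K, ↑p.1 ⊆ H) :
    D.AdmissibleIn H (A ∩ D.ballInter K) := by
  obtain ⟨L, hLH, rfl⟩ := h
  exact ⟨L ∪ K, fun p hp => hp.elim (hLH p) (hKH p), by rw [ballInter_union, Set.inter_assoc]⟩

theorem AdmissibleIn.iInter {ι : Type*} [Nonempty ι] {A : ι → Set X}
    (h : ∀ i, D.AdmissibleIn H (A i)) : D.AdmissibleIn H (⋂ i, A i) := by
  choose K hKH hA using h
  refine ⟨⋃ i, K i, fun p hp => ?_, ?_⟩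
  · obtain ⟨i, hi⟩ := Set.mem_iUnion.1 hp
    exact hKH i p hi
  · simp only [hA, ballInter_iUnion, Set.inter_iInter]

theorem HyperconvexOn.iInter_nonempty_of_directed (h : D.HyperconvexOn H) {ι : Type*} [Nonempty ι]
    {A : ι → Set X} (hdir : Directed (· ⊇ ·) A) (hA : ∀ i, D.AdmissibleIn H (A i))
    (hne : ∀ i, (A i).Nonempty) : (⋂ i, A i).Nonempty := by
  classical
  choose K hKH hA_eq using hA
  have hfeas : D.Feasible (⋃ i, K i) :=
    feasible_of_forall_finset_ballInter_nonempty fun F hF => by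
      obtain ⟨j, hj⟩ : ∃ j, A j ⊆ D.ballInter F := by
        have mem_some : ∀ p ∈ F, ∃ i, p ∈ K i := fun p hp => Set.mem_iUnion.1 (hF hp)
        choose! i hi using mem_some
        obtain ⟨j, hj⟩ := hdir.finset_le (F.image i)
        refine ⟨j, fun z hz p hp => ?_⟩
        have hzi := hj _ (Finset.mem_image_of_mem i hp) hz
        rw [hA_eq] at hzi
        exact hzi.2 p (hi p hp)
      exact (hne j).mono hj
  have center_subset : ∀ p ∈ ⋃ i, K i, ↑p.1 ⊆ H := fun p hp =>
    let ⟨i, hi⟩ := Set.mem_iUnion.1 hp; hKH i p hi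
  simpa only [hA_eq, ← Set.inter_iInter, ← ballInter_iUnion] using h _ center_subset hfeas

theorem HyperconvexOn.exists_center (h : D.HyperconvexOn A) {c : ℝ}
    (hc : ∀ F : Finset X, ↑F ⊆ A → D.delta F ≤ F.card * c) :
    ∃ z ∈ A, ∀ x ∈ A, D.delta {z, x} ≤ c := by
  obtain ⟨z, hzA, hz⟩ := h ((fun x => ({x}, c)) '' A) (by simp) fun F hF => by
    obtain ⟨G, hGA, rfl⟩ := Finset.subset_set_image_iff.1 hF
    rw [Finset.sum_image fun x _ y _ hxy => by simpa using hxy]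
    simpa [Finset.image_biUnion] using hc G hGA
  exact ⟨z, hzA, fun x hx => hz _ ⟨x, hx, rfl⟩⟩

section Chain

variable {ι : Type*}

/-- The decreasing families of nonempty admissible sets to which Zorn's lemma is applied. -/
structure IsAdmissibleFamily [Preorder ι] (D : Diversity X) (H A : ι → Set X) : Prop where
  admissible : ∀ i, D.AdmissibleIn (H i) (A i)
  nonempty : ∀ i, (A i).Nonempty
  antitone : Antitone A

theorem exists_minimal_isAdmissibleFamily [Preorder ι] {H : ι → Set X} (hH : Antitone H)
    (hHC : ∀ i, D.HyperconvexOn (H i)) : ∃ A, Minimal (D.IsAdmissibleFamily H) A := by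
  refine zorn_le₀ (α := (ι → Set X)ᵒᵈ) {A | D.IsAdmissibleFamily H A} fun 𝒞 h𝒞 hchain => ?_
  obtain rfl | hne := 𝒞.eq_empty_or_nonempty
  · exact ⟨H, ⟨fun _ => admissibleIn_self, fun i => (hHC i).nonempty, hH⟩, by simp⟩
  have := hne.to_subtype
  refine ⟨fun i => ⋂ B : 𝒞, B.1 i, ⟨fun i => ?_, fun i => ?_, fun i j hij => ?_⟩, fun B hB i => ?_⟩
  · exact AdmissibleIn.iInter fun B => (h𝒞 B.2).admissible i
  · refine (hHC i).iInter_nonempty_of_directed ?_ (fun B => (h𝒞 B.2).admissible i)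
      fun B => (h𝒞 B.2).nonempty i
    rintro ⟨B, hB⟩ ⟨C, hC⟩
    obtain hCB | hBC := hchain.total hB hC
    · exact ⟨⟨C, hC⟩, hCB i, subset_rfl⟩
    · exact ⟨⟨B, hB⟩, subset_rfl, hBC i⟩
  · exact Set.iInter_mono fun B => (h𝒞 B.2).antitone hij
  · exact Set.iInter_subset (fun B : 𝒞 => B.1 i) ⟨B, hB⟩

variable [LinearOrder ι] {H A : ι → Set X}

/-- Otherwise intersecting `A i` with this ball for all `i ≤ k` would give a smaller family. -/
theorem delta_insert_le_of_minimal (hH : Antitone H) (hA : Minimal (D.IsAdmissibleFamily H) A)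
    {k j : ι} (hjk : j ≤ k) {Y : Finset X} {c : ℝ} (hY : ↑Y ⊆ H k)
    (hc : ∀ z ∈ A k, D.delta (insert z Y) ≤ c) : ∀ z ∈ A j, D.delta (insert z Y) ≤ c := by
  let B (i : ι) : Set X := A i ∩ D.ballInter {p | i ≤ k ∧ p = (Y, c)}
  have mem_B {i z} : z ∈ B i ↔ z ∈ A i ∧ (i ≤ k → D.delta (insert z Y) ≤ c) := by
    refine and_congr_right fun _ => ⟨fun h hik => h (Y, c) ⟨hik, rfl⟩, ?_⟩
    rintro h _ ⟨hik, rfl⟩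
    exact h hik
  have hB : D.IsAdmissibleFamily H B := by
    refine ⟨fun i => ?_, fun i => ?_, fun i l hil z hz => ?_⟩
    · exact (hA.prop.admissible i).inter_ballInter fun p ⟨hik, hp⟩ => hp ▸ hY.trans (hH hik)
    · obtain hik | hki := le_or_gt i k
      · obtain ⟨z, hz⟩ := hA.prop.nonempty k
        exact ⟨z, mem_B.2 ⟨hA.prop.antitone hik hz, fun _ => hc z hz⟩⟩
      · obtain ⟨z, hz⟩ := hA.prop.nonempty i
        exact ⟨z, mem_B.2 ⟨hz, fun hik => absurd hki hik.not_gt⟩⟩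
    · obtain ⟨hzA, hz_ball⟩ := mem_B.1 hz
      refine mem_B.2 ⟨hA.prop.antitone hil hzA, fun _ => ?_⟩
      obtain hlk | hkl := le_total l k
      · exact hz_ball hlk
      · exact hc z (hA.prop.antitone hkl hzA)
  exact fun z hz => (mem_B.1 (hA.le_of_le hB (fun _ => Set.inter_subset_left) j hz)).2 hjk

/-- Otherwise replacing each `A i` by the set of its points `z` with `δ({z, x}) ≤ c` for all
`x ∈ A i` would give a smaller family. -/
theorem delta_pair_le_of_minimal (hH : Antitone H) (hHC : ∀ i, D.HyperconvexOn (H i))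
    (hA : Minimal (D.IsAdmissibleFamily H) A) {k : ι} {c : ℝ}
    (hc : ∀ F : Finset X, ↑F ⊆ A k → D.delta F ≤ F.card * c) :
    ∀ x ∈ A k, ∀ y ∈ A k, D.delta {x, y} ≤ c := by
  let B (i : ι) : Set X := A i ∩ D.ballInter ((fun x => ({x}, c)) '' A i)
  have mem_B {i z} : z ∈ B i ↔ z ∈ A i ∧ ∀ x ∈ A i, D.delta {z, x} ≤ c := by
    simp only [B, ballInter, Set.mem_inter_iff, Set.mem_ofPred_eq, Set.forall_mem_image]
  have B_antitone : Antitone B := fun i j hij z hz => by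
    obtain ⟨hzA, hz_center⟩ := mem_B.1 hz
    refine mem_B.2 ⟨hA.prop.antitone hij hzA, fun x hx => ?_⟩
    rw [Finset.pair_comm]
    refine delta_insert_le_of_minimal hH hA hij ?_ (fun y hy => ?_) x hx
    · simpa using (hA.prop.admissible j).subset hzA
    · rw [Finset.pair_comm]
      exact hz_center y hy
  have B_nonempty_of_ge {i} (hki : k ≤ i) : (B i).Nonempty := by
    have hAi := (hHC i).of_admissibleIn (hA.prop.admissible i) (hA.prop.nonempty i)
    obtain ⟨z, hz⟩ := hAi.exists_center fun F hF => hc F (hF.trans (hA.prop.antitone hki))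
    exact ⟨z, mem_B.2 hz⟩
  have hB : D.IsAdmissibleFamily H B := by
    refine ⟨fun i => (hA.prop.admissible i).inter_ballInter ?_, fun i => ?_, B_antitone⟩
    · rintro _ ⟨x, hx, rfl⟩
      simpa using (hA.prop.admissible i).subset hx
    · exact (le_total k i).elim B_nonempty_of_ge
        fun hik => (B_nonempty_of_ge le_rfl).mono (B_antitone hik)
  exact fun x hx => (mem_B.1 (hA.le_of_le hB (fun _ => Set.inter_subset_left) k hx)).2

theorem subsingleton_of_minimal (hB : D.Bounded) (hH : Antitone H)
    (hHC : ∀ i, D.HyperconvexOn (H i)) (hA : Minimal (D.IsAdmissibleFamily H) A) (k : ι) :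
    (A k).Subsingleton := by
  let distances : Set ℝ := Set.image2 (fun x y => D.delta {x, y}) (A k) (A k)
  have delta_mem {x y} (hx : x ∈ A k) (hy : y ∈ A k) : D.delta {x, y} ∈ distances :=
    Set.mem_image2_of_mem hx hy
  obtain ⟨m, hm⟩ : ∃ m, IsLUB distances m := by
    obtain ⟨z, hz⟩ := hA.prop.nonempty k
    obtain ⟨M, -, hM⟩ := hB
    exact Real.exists_isLUB ⟨_, delta_mem hz hz⟩ ⟨M, Set.forall_mem_image2.2 fun _ _ _ _ => hM _⟩
  have delta_le_m : ∀ x ∈ A k, ∀ y ∈ A k, D.delta {x, y} ≤ m :=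
    fun x hx y hy => hm.1 (delta_mem hx hy)
  have m_nonpos : m ≤ 0 := by
    by_contra! m_pos
    obtain ⟨c, hcm, hc⟩ := hB.exists_lt_forall_delta_le_card_mul m_pos delta_le_m
    exact hcm.not_ge (hm.2 (Set.forall_mem_image2.2 (delta_pair_le_of_minimal hH hHC hA hc)))
  intro x hx y hy
  have delta_eq_zero := ((delta_le_m x hx y hy).trans m_nonpos).antisymm (D.nonneg _)
  exact Finset.card_le_one.1 ((D.eq_zero_iff _).1 delta_eq_zero) x (by simp) y (by simp)

variable [Nonempty ι]

theorem iInter_nonempty_of_antitone (hB : D.Bounded) (hH : Antitone H)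
    (hHC : ∀ i, D.HyperconvexOn (H i)) : (⋂ i, H i).Nonempty := by
  obtain ⟨A, hA⟩ := exists_minimal_isAdmissibleFamily hH hHC
  obtain ⟨i₀⟩ := ‹Nonempty ι›
  obtain ⟨z, hz⟩ := hA.prop.nonempty i₀
  refine ⟨z, Set.mem_iInter.2 fun j => ?_⟩
  obtain ⟨w, hw⟩ := hA.prop.nonempty (max i₀ j)
  have hwz : w = z := subsingleton_of_minimal hB hH hHC hA i₀
    (hA.prop.antitone (le_max_left i₀ j) hw) hz
  exact hwz ▸ hH (le_max_right i₀ j) ((hA.prop.admissible _).subset hw)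

theorem HyperconvexOn.iInter_of_antitone (hB : D.Bounded) (hH : Antitone H)
    (hHC : ∀ i, D.HyperconvexOn (H i)) : D.HyperconvexOn (⋂ i, H i) := by
  intro K hKH hK
  rw [Set.iInter_inter]
  exact iInter_nonempty_of_antitone hB (fun i j hij => Set.inter_subset_inter_left _ (hH hij))
    fun i => (hHC i).inter_ballInter (fun p hp => (hKH p hp).trans (Set.iInter_subset _ i)) hK

end Chain

end Diversity

theorem nonempty_iInter_of_directed_hyperconvex_restrictions_general
    {X : Type*} [DecidableEq X] {I : Type*} [Nonempty I]
    (D : Diversity X) (hB : D.Bounded)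
    (H : I → Set X)
    (hdir : Directed (fun s t : Set X => t ⊆ s) H)
    (hhyp : ∀ i : I, (D.restrict (H i)).Hyperconvex) :
    (⋂ i, H i).Nonempty ∧ (D.restrict (⋂ i, H i)).Hyperconvex := by
  have hHC : D.HyperconvexOn (⋂ i, H i) :=
    iInf_of_directed_of_antitone_iInf
      (fun _ hf hP => Diversity.HyperconvexOn.iInter_of_antitone hB hf hP) hdir
      fun i => (hhyp i).hyperconvexOn hB
  exact ⟨hHC.nonempty, hHC.hyperconvex_restrict⟩

/-- If `(X, δ)` is a bounded hyperconvex diversity and `(H i)_{i ∈ I}`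
is a nonempty family of subsets of `X`, directed by reverse inclusion, such that each
restriction `(H i, δ)` is a hyperconvex diversity, then `⋂ i, H i` is nonempty. -/
theorem nonempty_iInter_of_directed_hyperconvex_restrictions
    {X : Type*} [DecidableEq X] {I : Type*} [Nonempty I]
    (D : Diversity X) (hH : D.Hyperconvex) (hB : D.Bounded)
    (H : I → Set X)
    (hdir : Directed (fun s t : Set X => t ⊆ s) H)
    (hhyp : ∀ i : I, (D.restrict (H i)).Hyperconvex) :
    (⋂ i, H i).Nonempty :=
  (nonempty_iInter_of_directed_hyperconvex_restrictions_general D hB H hdir hhyp).1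
end

section
/- Let (X, δ) be a hyperconvex diversity with induced metric d(x,y) = δ({x,y}), and let A ⊆ X be a nonempty admissible subset of the induced metric space (X, d), i.e., A is an intersection of closed balls of (X, d). Then the restricted diversity (A, δ|_A) is a hyperconvex diversity. -/
namespace Diversity

variable {X : Type*} [DecidableEq X]

/-- The closed ball of center `x` and radius `r` of the metric space induced by a
diversity (`d(x, y) = δ {x, y}`). -/
def ball (D : Diversity X) (x : X) (r : ℝ) : Set X :=
  {y : X | D.delta {x, y} ≤ r}

/-- A subset of `X` is admissible (with respect to the metric induced by the diversity)
if it is an intersection of closed balls. -/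
def IsAdmissible (D : Diversity X) (A : Set X) : Prop :=
  ∃ s : Set (X × ℝ), A = ⋂ p ∈ s, D.ball p.1 p.2

end Diversity

/-!
Hyperconvexity extends from functions on all finite subsets to families of constraints
`δ({z} ∪ Y i) ≤ v i` on a point `z`, with repeated or missing `Y i`: if
`δ(⋃_{i ∈ t} Y i) ≤ ∑_{i ∈ t} v i` for every finite `t`, then some `z` satisfies all of them.

Let `A` be a nonempty set cut out by such constraints, and let `r` be a function on the finite
subsets of `A` as in the definition of hyperconvexity. Adjoin the constraints given by `r` to those
defining `A`. The joint family still satisfies the criterion: a union `V` of finite subsets of `A`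
can be glued along a point `a ∈ A` (taken in `V` unless `V` is empty) to the `Y i`, at cost
`δ({a} ∪ Y i) ≤ v i` each. The resulting point `z` then lies in `A` and satisfies the bounds
imposed by `r`.
-/

open Finset

theorem le_sum_iInf_of_forall_le_sum {ι : Type*} {κ : ι → Type*} [∀ i, Nonempty (κ i)]
    {v : ∀ i, κ i → ℝ} {s : Finset ι} {c : ℝ} (h : ∀ f : ∀ i, κ i, c ≤ ∑ i ∈ s, v i (f i)) :
    c ≤ ∑ i ∈ s, ⨅ k, v i k := by
  refine le_of_forall_pos_le_add fun ε hε ↦ ?_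
  obtain ⟨η, hη, hηε⟩ := exists_pos_mul_lt hε (#s : ℝ)
  choose f hf using fun i ↦ exists_lt_of_ciInf_lt (lt_add_of_pos_right (⨅ k, v i k) hη)
  calc c ≤ ∑ i ∈ s, v i (f i) := h f
    _ ≤ ∑ i ∈ s, ((⨅ k, v i k) + η) := sum_le_sum fun i _ ↦ (hf i).le
    _ = ∑ i ∈ s, (⨅ k, v i k) + #s * η := by rw [sum_add_distrib, sum_const, nsmul_eq_mul]
    _ ≤ ∑ i ∈ s, (⨅ k, v i k) + ε := by gcongr

namespace Diversity

variable {X ι κ : Type*} [DecidableEq X] {D : Diversity X}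

theorem delta_empty_s6 (D : Diversity X) : D.delta ∅ = 0 :=
  (D.eq_zero_iff ∅).2 (by simp)

theorem delta_singleton_s6 (D : Diversity X) (a : X) : D.delta {a} = 0 :=
  (D.eq_zero_iff {a}).2 (by simp)

theorem delta_union_le (D : Diversity X) (a : X) (U V : Finset X) :
    D.delta (U ∪ V) ≤ D.delta (insert a U) + D.delta (insert a V) := by
  simpa only [union_singleton, singleton_union] using D.triangle U {a} V (singleton_nonempty a)

theorem delta_le_delta_insert_s6 (D : Diversity X) (a : X) (U : Finset X) :
    D.delta U ≤ D.delta (insert a U) := by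
  simpa [delta_singleton_s6] using D.delta_union_le a U ∅

theorem delta_insert_union_biUnion_le (D : Diversity X) (a : X) (U : Finset X) (t : Finset ι)
    (Y : ι → Finset X) :
    D.delta (insert a (U ∪ t.biUnion Y)) ≤
      D.delta (insert a U) + ∑ i ∈ t, D.delta (insert a (Y i)) := by
  classical
  induction t using Finset.induction_on with
  | empty => simp
  | insert i t hi ih =>
    calc D.delta (insert a (U ∪ (insert i t).biUnion Y))
        = D.delta (insert a (U ∪ t.biUnion Y) ∪ insert a (Y i)) := by
          rw [biUnion_insert, union_comm (Y i), ← union_assoc, insert_union_distrib]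
      _ ≤ D.delta (insert a (U ∪ t.biUnion Y)) + D.delta (insert a (Y i)) := by
          simpa only [insert_idem] using
            D.delta_union_le a (insert a (U ∪ t.biUnion Y)) (insert a (Y i))
      _ ≤ D.delta (insert a U) + ∑ j ∈ insert i t, D.delta (insert a (Y j)) := by
          rw [sum_insert hi]; linarith

theorem delta_union_biUnion_le (D : Diversity X) (a : X) (U : Finset X) (t : Finset ι)
    (Y : ι → Finset X) :
    D.delta (U ∪ t.biUnion Y) ≤ D.delta (insert a U) + ∑ i ∈ t, D.delta (insert a (Y i)) :=
  (D.delta_le_delta_insert_s6 a _).trans (D.delta_insert_union_biUnion_le a U t Y)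

/-- The constraints `δ({z} ∪ Y i) ≤ v i` on a point `z` are compatible if every finite
subfamily satisfies the inequality that the definition of hyperconvexity demands of `r`. The sets
`Y i` need be neither distinct nor exhaust the finite subsets of `X`. -/
def IsCompatible (D : Diversity X) (Y : ι → Finset X) (v : ι → ℝ) : Prop :=
  ∀ t : Finset ι, D.delta (t.biUnion Y) ≤ ∑ i ∈ t, v i

namespace IsCompatible

variable {Y : ι → Finset X} {v : ι → ℝ}

theorem nonneg (h : D.IsCompatible Y v) (i : ι) : 0 ≤ v i :=
  (D.nonneg _).trans ((h {i}).trans_eq (sum_singleton v i))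

theorem sumElim {Z : κ → Finset X} {w : κ → ℝ}
    (h : ∀ (t : Finset ι) (u : Finset κ),
      D.delta (t.biUnion Y ∪ u.biUnion Z) ≤ ∑ i ∈ t, v i + ∑ k ∈ u, w k) :
    D.IsCompatible (Sum.elim Y Z) (Sum.elim v w) := by
  intro s
  rw [← toLeft_disjSum_toRight (u := s), sum_disjSum, ← sup_eq_biUnion, sup_disjSum]
  simpa only [sup_eq_biUnion, Sum.elim_inl, Sum.elim_inr, sup_eq_union] using h s.toLeft s.toRight

theorem exists_delta_insert_biUnion_le (h : D.IsCompatible Y v) (a : X) :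
    ∃ K, ∀ t : Finset ι, D.delta (insert a (t.biUnion Y)) ≤ K + ∑ i ∈ t, v i := by
  classical
  by_cases hY : ∃ i, (Y i).Nonempty
  · obtain ⟨i, hi⟩ := hY
    refine ⟨D.delta (insert a (Y i)) + v i, fun t ↦ ?_⟩
    have hsum : ∑ j ∈ insert i t, v j ≤ v i + ∑ j ∈ t, v j := by
      by_cases hit : i ∈ t
      · rw [insert_eq_of_mem hit]; linarith [h.nonneg i]
      · rw [sum_insert hit]
    calc D.delta (insert a (t.biUnion Y))
        ≤ D.delta (insert a (Y i)) + D.delta ((insert i t).biUnion Y) := by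
          simpa only [singleton_union, biUnion_insert] using D.triangle {a} (Y i) (t.biUnion Y) hi
      _ ≤ D.delta (insert a (Y i)) + v i + ∑ j ∈ t, v j := by linarith [h (insert i t)]
  · have hempty : ∀ i, Y i = ∅ := by
      simpa only [not_exists, not_nonempty_iff_eq_empty] using hY
    refine ⟨0, fun t ↦ ?_⟩
    have ht : t.biUnion Y = ∅ := by ext; simp [hempty]
    rw [ht, insert_empty, delta_singleton_s6, zero_add]
    exact sum_nonneg fun i _ ↦ h.nonneg i

theorem exists_sumElim_id [Nonempty X] (h : D.IsCompatible Y v) :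
    ∃ w : Finset X → ℝ, D.IsCompatible (Sum.elim Y id) (Sum.elim v w) := by
  obtain ⟨a⟩ := ‹Nonempty X›
  obtain ⟨K, hK⟩ := h.exists_delta_insert_biUnion_le a
  have hK₀ : 0 ≤ K := by simpa [delta_singleton_s6] using hK ∅
  -- One copy of `K` pays for joining `a` to the sets `Y i`; every `Z` is then glued on along `a`.
  refine ⟨fun Z ↦ K + D.delta (insert a Z), sumElim fun t u ↦ ?_⟩
  obtain rfl | hu := u.eq_empty_or_nonempty
  · simpa using h t
  have hK_le : K ≤ ∑ _Z ∈ u, K := by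
    rw [sum_const]
    exact le_self_nsmul hK₀ hu.card_ne_zero
  calc D.delta (t.biUnion Y ∪ u.biUnion id)
      ≤ D.delta (insert a (t.biUnion Y)) + ∑ Z ∈ u, D.delta (insert a Z) :=
        D.delta_union_biUnion_le a _ u id
    _ ≤ ∑ i ∈ t, v i + ∑ Z ∈ u, (K + D.delta (insert a Z)) := by
        rw [sum_add_distrib]
        linarith [hK t]

end IsCompatible

namespace Hyperconvex

theorem nonempty (hD : D.Hyperconvex) : Nonempty X := by
  by_contra hX
  rw [not_nonempty_iff] at hX
  obtain ⟨z, -⟩ := hD 0 rfl fun 𝒜 ↦ by simp [eq_empty_of_isEmpty, delta_empty_s6]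
  exact hX.false z

theorem exists_forall_delta_insert_le_of_id (hD : D.Hyperconvex) {r : Finset X → ℝ}
    (hr : D.IsCompatible id r) : ∃ z, ∀ Y, D.delta (insert z Y) ≤ r Y := by
  set r₀ := Function.update r ∅ 0
  have hr₀ : r₀ ∅ = 0 := Function.update_self ..
  have hr₀_le : r₀ ≤ r := update_le_self_iff.2 (hr.nonneg ∅)
  obtain ⟨z, hz⟩ := hD r₀ hr₀ fun 𝒜 ↦ calc
    D.delta (𝒜.sup id) = D.delta ((𝒜.erase ∅).biUnion id) := by
      rw [← sup_eq_biUnion, ← bot_eq_empty, sup_erase_bot]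
    _ ≤ ∑ Y ∈ 𝒜.erase ∅, r Y := hr _
    _ = ∑ Y ∈ 𝒜.erase ∅, r₀ Y :=
      sum_congr rfl fun Y hY ↦ (Function.update_of_ne (ne_of_mem_erase hY) _ _).symm
    _ = ∑ Y ∈ 𝒜, r₀ Y := sum_erase _ hr₀
  exact ⟨z, fun Y ↦ (hz Y).trans (hr₀_le Y)⟩

theorem exists_forall_delta_insert_le_of_surjective (hD : D.Hyperconvex) {Y : ι → Finset X}
    {v : ι → ℝ} (hY : Y.Surjective) (h : D.IsCompatible Y v) :
    ∃ z, ∀ i, D.delta (insert z (Y i)) ≤ v i := by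
  have (Z : Finset X) : Nonempty {i // Y i = Z} := nonempty_subtype.2 (hY Z)
  let r (Z : Finset X) : ℝ := ⨅ i : {i // Y i = Z}, v i
  have hr : D.IsCompatible id r := by
    classical
    refine fun 𝒜 ↦ le_sum_iInf_of_forall_le_sum fun f ↦ ?_
    have hf : Function.RightInverse (fun Z ↦ (f Z : ι)) Y := fun Z ↦ (f Z).2
    calc D.delta (𝒜.biUnion id)
        = D.delta ((𝒜.image fun Z ↦ (f Z : ι)).biUnion Y) := by
          rw [image_biUnion, funext hf]; rfl
      _ ≤ ∑ i ∈ 𝒜.image fun Z ↦ (f Z : ι), v i := h _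
      _ = ∑ Z ∈ 𝒜, v (f Z) := sum_image hf.injective.injOn
  obtain ⟨z, hz⟩ := hD.exists_forall_delta_insert_le_of_id hr
  refine ⟨z, fun i ↦ (hz (Y i)).trans ?_⟩
  exact ciInf_le (f := fun j : {j // Y j = Y i} ↦ v j)
    ⟨0, Set.forall_mem_range.2 fun j ↦ h.nonneg j⟩ ⟨i, rfl⟩

theorem exists_forall_delta_insert_le (hD : D.Hyperconvex) {Y : ι → Finset X} {v : ι → ℝ}
    (h : D.IsCompatible Y v) : ∃ z, ∀ i, D.delta (insert z (Y i)) ≤ v i := by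
  have := hD.nonempty
  obtain ⟨w, hw⟩ := h.exists_sumElim_id
  obtain ⟨z, hz⟩ := hD.exists_forall_delta_insert_le_of_surjective
    (fun Z ↦ ⟨Sum.inr Z, rfl⟩) hw
  exact ⟨z, fun i ↦ hz (Sum.inl i)⟩

end Hyperconvex

theorem exists_mem_delta_insert_eq (D : Diversity X) {A : Set X} (hA : A.Nonempty) {U : Finset X}
    (hU : ↑U ⊆ A) : ∃ a ∈ A, D.delta (insert a U) = D.delta U := by
  obtain rfl | ⟨a, ha⟩ := U.eq_empty_or_nonempty
  · obtain ⟨a, ha⟩ := hA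
    exact ⟨a, ha, by rw [insert_empty, delta_singleton_s6, delta_empty_s6]⟩
  · exact ⟨a, hU ha, by rw [insert_eq_of_mem ha]⟩

theorem IsCompatible.sumElim_of_subset {A : Set X} (hA : A.Nonempty) {Y : ι → Finset X} {v : ι → ℝ}
    {Z : κ → Finset X} {w : κ → ℝ} (hY : D.IsCompatible Y v) (hYA : ∀ i, ↑(Y i) ⊆ A)
    (hZ : ∀ a ∈ A, ∀ k, D.delta (insert a (Z k)) ≤ w k) :
    D.IsCompatible (Sum.elim Y Z) (Sum.elim v w) := by
  refine sumElim fun t u ↦ ?_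
  have htA : ↑(t.biUnion Y) ⊆ A := by
    rw [coe_biUnion]
    exact Set.iUnion₂_subset fun i _ ↦ hYA i
  obtain ⟨a, ha, hat⟩ := D.exists_mem_delta_insert_eq hA htA
  calc D.delta (t.biUnion Y ∪ u.biUnion Z)
      ≤ D.delta (insert a (t.biUnion Y)) + ∑ k ∈ u, D.delta (insert a (Z k)) :=
        D.delta_union_biUnion_le a _ u Z
    _ ≤ ∑ i ∈ t, v i + ∑ k ∈ u, w k :=
        add_le_add (hat.trans_le (hY t)) (sum_le_sum fun k _ ↦ hZ a ha k)

theorem isCompatible_image_val_iff {A : Set X} {Y : ι → Finset A} {v : ι → ℝ} :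
    D.IsCompatible (fun i ↦ (Y i).image Subtype.val) v ↔ (D.restrict A).IsCompatible Y v := by
  simp only [IsCompatible, restrict, biUnion_image]

end Diversity

theorem restrict_hyperconvex_of_admissible_general
    {X ι : Type*} [DecidableEq X] (D : Diversity X) (hH : D.Hyperconvex)
    (Y : ι → Finset X) (v : ι → ℝ) (A : Set X) (hAne : A.Nonempty)
    (hA : ∀ z, z ∈ A ↔ ∀ i, D.delta (insert z (Y i)) ≤ v i) :
    (D.restrict A).Hyperconvex := by
  intro r _ hr
  have hr' : D.IsCompatible (fun B : Finset A ↦ B.image Subtype.val) r :=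
    Diversity.isCompatible_image_val_iff (Y := id).2 fun 𝒜 ↦ sup_eq_biUnion 𝒜 id ▸ hr 𝒜
  have hjoint := hr'.sumElim_of_subset hAne (fun B ↦ by simp) fun a ha ↦ (hA a).1 ha
  obtain ⟨z, hz⟩ := hH.exists_forall_delta_insert_le hjoint
  have hzA : z ∈ A := (hA z).2 fun i ↦ hz (Sum.inr i)
  refine ⟨⟨z, hzA⟩, fun B ↦ ?_⟩
  simpa only [Diversity.restrict, image_insert, Sum.elim_inl] using hz (Sum.inl B)

/-- If `(X, δ)` is a hyperconvex diversity and `A ⊆ X` is a nonempty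
admissible subset of the induced metric space (an intersection of closed balls), then
the restricted diversity `(A, δ|_A)` is hyperconvex. -/
theorem restrict_hyperconvex_of_admissible
    {X : Type*} [DecidableEq X] (D : Diversity X)
    (hH : D.Hyperconvex)
    (A : Set X) (hAne : A.Nonempty) (hAadm : D.IsAdmissible A) :
    (D.restrict A).Hyperconvex := by
  obtain ⟨s, rfl⟩ := hAadm
  exact restrict_hyperconvex_of_admissible_general D hH (fun p : s ↦ {p.1.1}) (fun p ↦ p.1.2) _ hAne
    fun z ↦ by simp [Diversity.ball, pair_comm]
end

section
/- There exist a hyperconvex diversity (X, δ) whose induced metric space (X, d) is bounded, and a mapping T : X → X that is nonexpansive with respect to d but has no fixed point. In particular, the induced metric space of a hyperconvex diversity, even when bounded, need not have the fixed point property for nonexpansive mappings. -/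
/-!
On a generalized Boolean algebra `α` (eventually the finite subsets of `ℤ`), consider the
superadditive games `v : α → [0, 1]` that are maximal, equivalently constant-sum:
`v a = 1 - sup {v b | b disjoint from a}`. For a finite set `F` of such games let `δ F` be the
largest value of `∑ w ∈ F, w (E w) - 1` over pairwise disjoint families `E`, or `0` if that is
negative. This is a diversity. It is hyperconvex, because every system of lower bounds on the values
of a game that is consistent along finite disjoint families is met by a constant-sum game: the point
required by hyperconvexity solves such a system. Distances are at most `1`, as two games have total
value at most `2`.

An automorphism of `α` acts on games without increasing distances. A fixed game `x` gives `a` and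
all its translates the same value, so `x a ≤ 1 / 2` as soon as some translate of `a` is disjoint
from `a`. If this holds for every `a`, then the constant-sum condition at the empty coalition yields
`1 / 2 ≤ x ⊥ = 0`. The shift of `ℤ` moves every finite set off itself.
-/

section CappedGame

variable {α : Type*} [GeneralizedBooleanAlgebra α]

/-- A superadditive game on a generalized Boolean algebra of coalitions, with values in `[0, 1]`. -/
structure IsCappedGame (v : α → ℝ) : Prop where
  nonneg : ∀ a, 0 ≤ v a
  add_le_sup : ∀ a b, Disjoint a b → v a + v b ≤ v (a ⊔ b)
  le_one : ∀ a, v a ≤ 1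

namespace IsCappedGame

variable {v : α → ℝ}

theorem apply_bot (hv : IsCappedGame v) : v ⊥ = 0 := by
  have hsup := hv.add_le_sup ⊥ ⊥ disjoint_bot_left
  rw [sup_idem] at hsup
  linarith [hv.nonneg ⊥]

theorem sum_le_sup (hv : IsCappedGame v) {J : Type*} {s : Finset J} {E : J → α}
    (hE : (s : Set J).PairwiseDisjoint E) : ∑ j ∈ s, v (E j) ≤ v (s.sup E) := by
  classical
  induction s using Finset.induction_on with
  | empty => simpa using hv.nonneg ⊥
  | insert j s hj ih =>
    rw [Finset.coe_insert, Set.pairwiseDisjoint_insert_of_notMem (by simpa using hj)] at hE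
    rw [Finset.sum_insert hj, Finset.sup_insert]
    have hdisj : Disjoint (E j) (s.sup E) := Finset.disjoint_sup_right.2 fun k hk => hE.2 k hk
    linarith [ih hE.1, hv.add_le_sup _ _ hdisj]

theorem iSup_of_directed {ι : Type*} [Nonempty ι] {v : ι → α → ℝ} (hv : ∀ i, IsCappedGame (v i))
    (hdir : Directed (· ≤ ·) v) : IsCappedGame (⨆ i, v i) := by
  have hbdd (a : α) : BddAbove (Set.range fun i => v i a) :=
    ⟨1, Set.forall_mem_range.2 fun i => (hv i).le_one a⟩
  refine ⟨fun a => ?_, fun a b hab => ?_, fun a => ?_⟩ <;> simp only [iSup_apply]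
  · exact Real.iSup_nonneg fun i => (hv i).nonneg a
  · refine ciSup_add_ciSup_le fun i j => ?_
    obtain ⟨k, hik, hjk⟩ := hdir i j
    calc v i a + v j b ≤ v k a + v k b := add_le_add (hik a) (hjk b)
      _ ≤ v k (a ⊔ b) := (hv k).add_le_sup a b hab
      _ ≤ ⨆ i, v i (a ⊔ b) := le_ciSup (hbdd (a ⊔ b)) k
  · exact ciSup_le fun i => (hv i).le_one a

theorem exists_maximal_ge (hv : IsCappedGame v) :
    ∃ w, v ≤ w ∧ Maximal (IsCappedGame (α := α)) w := by
  refine zorn_le_nonempty₀ {w : α → ℝ | IsCappedGame w} (fun c hc hchain w hw => ?_) v hv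
  have : Nonempty c := ⟨⟨w, hw⟩⟩
  refine ⟨⨆ f : c, f.1, iSup_of_directed (fun f => hc f.2) hchain.directedOn.directed_val,
    fun f hf a => ?_⟩
  rw [iSup_apply]
  exact le_ciSup (f := fun f : c => f.1 a)
    ⟨1, Set.forall_mem_range.2 fun f => (hc f.2).le_one a⟩ ⟨f, hf⟩

end IsCappedGame

open Classical in
/-- For a capped game `v` and `a ≠ ⊥`, the least superadditive game above `v` whose value at `a` is
at least `t`. It serves to test maximality of `v`. -/
noncomputable def raiseGame (v : α → ℝ) (a : α) (t : ℝ) (c : α) : ℝ :=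
  if a ≤ c then max (v c) (t + v (c \ a)) else v c

theorem le_raiseGame (v : α → ℝ) (a : α) (t : ℝ) : v ≤ raiseGame v a t := fun c => by
  unfold raiseGame
  split_ifs
  exacts [le_max_left _ _, le_rfl]

theorem IsCappedGame.raiseGame_add_le {v : α → ℝ} (hv : IsCappedGame v) {a c d : α} (t : ℝ)
    (hac : a ≤ c) (hcd : Disjoint c d) : raiseGame v a t c + v d ≤ raiseGame v a t (c ⊔ d) := by
  have hsdiff : c \ a ⊔ d = (c ⊔ d) \ a := by
    rw [sup_sdiff, (hcd.mono_left hac).sdiff_eq_right]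
  have hadd := hv.add_le_sup (c \ a) d (hcd.mono_left sdiff_le)
  rw [hsdiff] at hadd
  simp only [raiseGame, if_pos hac, if_pos (hac.trans le_sup_left), max_add]
  exact max_le_max (hv.add_le_sup c d hcd) (by linarith)

theorem IsCappedGame.isCappedGame_raiseGame {v : α → ℝ} (hv : IsCappedGame v) {a : α} (ha : a ≠ ⊥)
    {t : ℝ} (ht : ∀ b, Disjoint a b → t + v b ≤ 1) : IsCappedGame (raiseGame v a t) := by
  have raise_eq {c : α} (hc : ¬a ≤ c) : raiseGame v a t c = v c := if_neg hc
  refine ⟨fun c => (hv.nonneg c).trans (le_raiseGame v a t c), fun c d hcd => ?_, fun c => ?_⟩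
  · by_cases hac : a ≤ c
    · have had : ¬a ≤ d := fun had => ha (le_bot_iff.1 (hcd hac had))
      rw [raise_eq had]
      exact hv.raiseGame_add_le t hac hcd
    by_cases had : a ≤ d
    · rw [raise_eq hac, add_comm, sup_comm]
      exact hv.raiseGame_add_le t had hcd.symm
    · rw [raise_eq hac, raise_eq had]
      exact (hv.add_le_sup c d hcd).trans (le_raiseGame v a t _)
  · unfold raiseGame
    split_ifs
    exacts [max_le (hv.le_one c) (ht _ disjoint_sdiff_self_right), hv.le_one c]

theorem IsCappedGame.le_apply_of_maximal_of_ne_bot {v : α → ℝ} (hv : Maximal IsCappedGame v) {a : α}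
    (ha : a ≠ ⊥) {t : ℝ} (ht : ∀ b, Disjoint a b → t + v b ≤ 1) : t ≤ v a :=
  calc t = t + v (a \ a) := by rw [sdiff_self, hv.prop.apply_bot, add_zero]
    _ ≤ raiseGame v a t a := by rw [raiseGame, if_pos le_rfl]; exact le_max_right _ _
    _ ≤ v a := hv.le_of_ge (hv.prop.isCappedGame_raiseGame ha ht) (le_raiseGame v a t) a

theorem IsCappedGame.le_apply_of_maximal [Nontrivial α] {v : α → ℝ} (hv : Maximal IsCappedGame v)
    {a : α} {t : ℝ} (ht : ∀ b, Disjoint a b → t + v b ≤ 1) : t ≤ v a := by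
  rcases eq_or_ne a ⊥ with rfl | ha
  · obtain ⟨b, hb⟩ := exists_ne (⊥ : α)
    have hadd : t + v b ≤ v b := le_apply_of_maximal_of_ne_bot hv hb fun c hbc => by
      linarith [ht (b ⊔ c) disjoint_bot_left, hv.prop.add_le_sup b c hbc]
    linarith [hv.prop.nonneg ⊥]
  · exact le_apply_of_maximal_of_ne_bot hv ha ht

end CappedGame

section SuperadditiveCover

variable {α I : Type*} [GeneralizedBooleanAlgebra α]

/-- The least nonnegative superadditive game with value at least `t i` at each `c i`: the value of
`a` is the largest total worth of finitely many disjoint coalitions `c i ≤ a`, each `c i` being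
worth `t i`. The supremum is only meaningful when these totals are bounded. -/
noncomputable def superadditiveCover (c : I → α) (t : I → ℝ) (a : α) : ℝ :=
  ⨆ s : {s : Finset I // (s : Set I).PairwiseDisjoint c ∧ ∀ i ∈ s, c i ≤ a}, ∑ i ∈ s.1, t i

variable {c : I → α} {t : I → ℝ}

theorem sum_le_superadditiveCover {M : ℝ}
    (hsum : ∀ s : Finset I, (s : Set I).PairwiseDisjoint c → ∑ i ∈ s, t i ≤ M) {a : α}
    {s : Finset I} (hs : (s : Set I).PairwiseDisjoint c) (hsa : ∀ i ∈ s, c i ≤ a) :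
    ∑ i ∈ s, t i ≤ superadditiveCover c t a :=
  le_ciSup (f := fun s : {s : Finset I // (s : Set I).PairwiseDisjoint c ∧ ∀ i ∈ s, c i ≤ a} =>
    ∑ i ∈ s.1, t i) ⟨M, Set.forall_mem_range.2 fun s => hsum s.1 s.2.1⟩ ⟨s, hs, hsa⟩

theorem superadditiveCover_add_le {M : ℝ} (hbot : ∀ i, c i = ⊥ → t i ≤ 0)
    (hsum : ∀ s : Finset I, (s : Set I).PairwiseDisjoint c → ∑ i ∈ s, t i ≤ M) {a b : α}
    (hab : Disjoint a b) :
    superadditiveCover c t a + superadditiveCover c t b ≤ superadditiveCover c t (a ⊔ b) := by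
  classical
  have nonempty (a : α) :
      Nonempty {s : Finset I // (s : Set I).PairwiseDisjoint c ∧ ∀ i ∈ s, c i ≤ a} :=
    ⟨∅, by simp⟩
  refine ciSup_add_ciSup_le fun ⟨s, hs, hsa⟩ ⟨s', hs', hsb⟩ => ?_
  have hinter : ∑ i ∈ s ∩ s', t i ≤ 0 := Finset.sum_nonpos fun i hi =>
    have hi := Finset.mem_inter.1 hi
    hbot i (le_bot_iff.1 (hab (hsa i hi.1) (hsb i hi.2)))
  have hunion : ((s ∪ s' : Finset I) : Set I).PairwiseDisjoint c := by
    rw [Finset.coe_union]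
    exact hs.union hs' fun i hi j hj _ => hab.mono (hsa i hi) (hsb j hj)
  calc ∑ i ∈ s, t i + ∑ i ∈ s', t i = ∑ i ∈ s ∪ s', t i + ∑ i ∈ s ∩ s', t i :=
        Finset.sum_union_inter.symm
    _ ≤ ∑ i ∈ s ∪ s', t i := by linarith
    _ ≤ superadditiveCover c t (a ⊔ b) := sum_le_superadditiveCover hsum hunion fun i hi =>
        (Finset.mem_union.1 hi).elim (fun hi => (hsa i hi).trans le_sup_left)
          fun hi => (hsb i hi).trans le_sup_right

theorem isCappedGame_superadditiveCover (hbot : ∀ i, c i = ⊥ → t i ≤ 0)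
    (hsum : ∀ s : Finset I, (s : Set I).PairwiseDisjoint c → ∑ i ∈ s, t i ≤ 1) :
    IsCappedGame (superadditiveCover c t) where
  nonneg a := by simpa using sum_le_superadditiveCover hsum (a := a) (s := ∅) (by simp) (by simp)
  add_le_sup _ _ := superadditiveCover_add_le hbot hsum
  le_one _ := Real.iSup_le (fun s => hsum s.1 s.2.1) zero_le_one

end SuperadditiveCover

/-- A capped superadditive game such that `v a = 1 - sup {v b | Disjoint a b}` for all `a`; in a
Boolean algebra, where `b = aᶜ` is the best choice, this says `v a + v aᶜ = 1`. Since `≤` follows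
from superadditivity, only `≥` is required, in a form that avoids the supremum. -/
@[ext]
structure ConstantSumGame (α : Type*) [GeneralizedBooleanAlgebra α] where
  toFun : α → ℝ
  isCappedGame : IsCappedGame toFun
  le_of_forall_disjoint : ∀ a t, (∀ b, Disjoint a b → t + toFun b ≤ 1) → t ≤ toFun a

namespace ConstantSumGame

variable {α β : Type*} [GeneralizedBooleanAlgebra α] [GeneralizedBooleanAlgebra β]

instance : CoeFun (ConstantSumGame α) fun _ => α → ℝ := ⟨toFun⟩

noncomputable instance : DecidableEq (ConstantSumGame α) := Classical.decEq _

theorem exists_forall_le [Nontrivial α] {I : Type*} {c : I → α} {t : I → ℝ}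
    (hbot : ∀ i, c i = ⊥ → t i ≤ 0)
    (hsum : ∀ s : Finset I, (s : Set I).PairwiseDisjoint c → ∑ i ∈ s, t i ≤ 1) :
    ∃ z : ConstantSumGame α, ∀ i, t i ≤ z (c i) := by
  obtain ⟨z, hle, hz⟩ := (isCappedGame_superadditiveCover hbot hsum).exists_maximal_ge
  refine ⟨⟨z, hz.prop, fun a t ht => IsCappedGame.le_apply_of_maximal hz ht⟩, fun i => ?_⟩
  calc t i = ∑ j ∈ {i}, t j := (Finset.sum_singleton t i).symm
    _ ≤ superadditiveCover c t (c i) := sum_le_superadditiveCover hsum (by simp) (by simp)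
    _ ≤ z (c i) := hle (c i)

theorem le_of_forall_disjoint_add_le_one {x y : ConstantSumGame α}
    (h : ∀ a b, Disjoint a b → x a + y b ≤ 1) : x.toFun ≤ y.toFun := fun a =>
  y.le_of_forall_disjoint a (x a) (h a)

/-- The diversity of a finite set `F` of games, that is, the least `c ≥ 0` such that disjoint
coalitions, one for each game in `F`, have total value at most `1 + c`. -/
noncomputable def excess (F : Finset (ConstantSumGame α)) : ℝ :=
  sInf {c | 0 ≤ c ∧ ∀ E : ConstantSumGame α → α,
    (F : Set (ConstantSumGame α)).PairwiseDisjoint E → ∑ w ∈ F, w (E w) ≤ 1 + c}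

variable {F : Finset (ConstantSumGame α)}

theorem excess_le {c : ℝ} (hc : 0 ≤ c)
    (h : ∀ E : ConstantSumGame α → α, (F : Set (ConstantSumGame α)).PairwiseDisjoint E →
      ∑ w ∈ F, w (E w) ≤ 1 + c) : excess F ≤ c :=
  csInf_le ⟨0, fun _ hx => hx.1⟩ ⟨hc, h⟩

theorem excess_nonneg (F : Finset (ConstantSumGame α)) : 0 ≤ excess F :=
  Real.sInf_nonneg fun _ hc => hc.1

theorem sum_le_card (F : Finset (ConstantSumGame α)) (E : ConstantSumGame α → α) :
    ∑ w ∈ F, w (E w) ≤ F.card := by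
  simpa using Finset.sum_le_card_nsmul F (fun w => w (E w)) 1 fun w _ => w.isCappedGame.le_one _

theorem sum_le_one_add_excess {E : ConstantSumGame α → α}
    (hE : (F : Set (ConstantSumGame α)).PairwiseDisjoint E) :
    ∑ w ∈ F, w (E w) ≤ 1 + excess F := by
  rw [← sub_le_iff_le_add']
  refine le_csInf ⟨F.card, Nat.cast_nonneg _, fun E _ => ?_⟩ fun c hc => ?_
  · linarith [sum_le_card F E]
  · linarith [hc.2 E hE]

/-- Coalitions assigned to the same game can be merged by superadditivity. -/
theorem sum_indexed_le_one_add_excess {J : Type*} {s : Finset J} {w : J → ConstantSumGame α}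
    {E : J → α} (hw : ∀ j ∈ s, w j ∈ F) (hE : (s : Set J).PairwiseDisjoint E) :
    ∑ j ∈ s, w j (E j) ≤ 1 + excess F := by
  let merged (g : ConstantSumGame α) : α := (s.filter (w · = g)).sup E
  have hmerged : (F : Set (ConstantSumGame α)).PairwiseDisjoint merged := by
    refine fun g _ g' _ hgg' => Finset.disjoint_sup_left.2 fun j hj =>
      Finset.disjoint_sup_right.2 fun k hk => ?_
    rw [Finset.mem_filter] at hj hk
    exact hE hj.1 hk.1 fun hjk => hgg' (by rw [← hj.2, ← hk.2, hjk])
  calc ∑ j ∈ s, w j (E j) = ∑ g ∈ F, ∑ j ∈ s with w j = g, w j (E j) :=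
        (Finset.sum_fiberwise_of_maps_to hw _).symm
    _ = ∑ g ∈ F, ∑ j ∈ s with w j = g, g (E j) :=
        Finset.sum_congr rfl fun g _ => Finset.sum_congr rfl fun j hj => by
          rw [(Finset.mem_filter.1 hj).2]
    _ ≤ ∑ g ∈ F, g (merged g) := Finset.sum_le_sum fun g _ =>
        g.isCappedGame.sum_le_sup (hE.subset (Finset.coe_subset.2 (Finset.filter_subset _ _)))
    _ ≤ 1 + excess F := sum_le_one_add_excess hmerged

theorem sum_add_le_one_add_excess {A : Finset (ConstantSumGame α)} (hA : A ⊆ F)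
    {g : ConstantSumGame α} (hg : g ∈ F) {E : ConstantSumGame α → α}
    (hE : (A : Set (ConstantSumGame α)).PairwiseDisjoint E) {e : α} (he : Disjoint (A.sup E) e) :
    ∑ w ∈ A, w (E w) + g e ≤ 1 + excess F := by
  rw [Finset.disjoint_sup_left] at he
  have hsum := sum_indexed_le_one_add_excess (F := F) (s := A.insertNone)
    (w := fun o => o.elim g id) (E := fun o => o.elim e E)
    (Finset.forall_mem_insertNone.2 ⟨hg, fun w hw => hA hw⟩) (by
      rintro (_ | w) hw (_ | w') hw' hne
      · exact absurd rfl hne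
      · exact (he (Finset.some_mem_insertNone.1 hw')).symm
      · exact he (Finset.some_mem_insertNone.1 hw)
      · exact hE (Finset.some_mem_insertNone.1 hw) (Finset.some_mem_insertNone.1 hw')
          (by simpa using hne))
  rw [Finset.sum_insertNone, add_comm] at hsum
  exact hsum

theorem excess_le_card_sub_one (F : Finset (ConstantSumGame α)) : excess F ≤ (F.card - 1 : ℕ) := by
  refine excess_le (Nat.cast_nonneg _) fun E _ => (sum_le_card F E).trans ?_
  norm_cast
  lia

theorem excess_eq_zero_iff : excess F = 0 ↔ F.card ≤ 1 := by
  refine ⟨fun h => Finset.card_le_one.2 fun x hx y hy => ?_, fun h => ?_⟩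
  · have pair_le {x y : ConstantSumGame α} (hx : x ∈ F) (hy : y ∈ F) (a b : α)
        (hab : Disjoint a b) : x a + y b ≤ 1 := by
      have hsum := sum_add_le_one_add_excess (Finset.singleton_subset_iff.2 hx) hy
        (E := fun _ => a) (e := b) (by simp) (by simpa using hab)
      simpa [h] using hsum
    exact ConstantSumGame.ext (le_antisymm (le_of_forall_disjoint_add_le_one (pair_le hx hy))
      (le_of_forall_disjoint_add_le_one (pair_le hy hx)))
  · refine le_antisymm ((excess_le_card_sub_one F).trans ?_) (excess_nonneg F)
    simp [Nat.sub_eq_zero_of_le h]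

theorem excess_triangle (A : Finset (ConstantSumGame α)) {B : Finset (ConstantSumGame α)}
    (C : Finset (ConstantSumGame α)) (hB : B.Nonempty) :
    excess (A ∪ C) ≤ excess (A ∪ B) + excess (B ∪ C) := by
  obtain ⟨g, hg⟩ := hB
  refine excess_le (add_nonneg (excess_nonneg _) (excess_nonneg _)) fun E hE => ?_
  have hEA : (A : Set (ConstantSumGame α)).PairwiseDisjoint E := hE.subset (by simp)
  have hEC : ((C \ A : Finset _) : Set (ConstantSumGame α)).PairwiseDisjoint E :=
    hE.subset fun w hw => by simp_all
  have hdisj : Disjoint ((C \ A).sup E) (A.sup E) :=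
    Finset.disjoint_sup_left.2 fun c hc => Finset.disjoint_sup_right.2 fun a ha => by
      rw [Finset.mem_sdiff] at hc
      exact hE (by simp [hc.1]) (by simp [ha]) fun hca => hc.2 (hca ▸ ha)
  have hA : ∑ w ∈ A, w (E w) - excess (A ∪ B) ≤ g (A.sup E) :=
    g.le_of_forall_disjoint _ _ fun b hb => by
      linarith [sum_add_le_one_add_excess Finset.subset_union_left
        (Finset.mem_union_right A hg) hEA hb]
  have hC : ∑ w ∈ C \ A, w (E w) + g (A.sup E) ≤ 1 + excess (B ∪ C) :=
    sum_add_le_one_add_excess (Finset.sdiff_subset.trans Finset.subset_union_right)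
      (Finset.mem_union_left C hg) hEC hdisj
  rw [← Finset.union_sdiff_self_eq_union, Finset.sum_union Finset.disjoint_sdiff]
  linarith

/-- The diversity on the constant-sum games over `α` whose value is the excess. -/
@[simps]
noncomputable def diversity (α : Type*) [GeneralizedBooleanAlgebra α] :
    Diversity (ConstantSumGame α) where
  delta := excess
  nonneg := excess_nonneg
  eq_zero_iff _ := excess_eq_zero_iff
  triangle A _ C := excess_triangle A C

theorem sum_sum_le_one_add_excess {J : Type*} {s : Finset J} {Y : J → Finset (ConstantSumGame α)}
    {E : J → ConstantSumGame α → α} (hF : ∀ j ∈ s, Y j ⊆ F)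
    (hE : ∀ j ∈ s, (Y j : Set (ConstantSumGame α)).PairwiseDisjoint (E j))
    (hs : (s : Set J).PairwiseDisjoint fun j => (Y j).sup (E j)) :
    ∑ j ∈ s, ∑ y ∈ Y j, y (E j y) ≤ 1 + excess F := by
  rw [Finset.sum_sigma']
  refine sum_indexed_le_one_add_excess (fun p hp => ?_) fun p hp q hq hpq => ?_
  · rw [Finset.mem_sigma] at hp
    exact hF _ hp.1 hp.2
  · obtain ⟨j, y⟩ := p
    obtain ⟨k, y'⟩ := q
    rw [Finset.mem_coe, Finset.mem_sigma] at hp hq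
    rcases eq_or_ne j k with rfl | hjk
    · exact hE j hp.1 hp.2 hq.2 fun hy => hpq (congrArg (Sigma.mk j) hy)
    · exact (hs hp.1 hq.1 hjk).mono (Finset.le_sup hp.2) (Finset.le_sup hq.2)

theorem exists_forall_sum_sub_le [Nontrivial α] {r : Finset (ConstantSumGame α) → ℝ}
    (hr : ∀ 𝒜 : Finset (Finset (ConstantSumGame α)), excess (𝒜.sup id) ≤ ∑ A ∈ 𝒜, r A) :
    ∃ z : ConstantSumGame α, ∀ (Y : Finset (ConstantSumGame α)) (E : ConstantSumGame α → α),
      (Y : Set (ConstantSumGame α)).PairwiseDisjoint E →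
        ∑ y ∈ Y, y (E y) - r Y ≤ z (Y.sup E) := by
  have hr₀ (Y) : 0 ≤ r Y := (excess_nonneg Y).trans (by simpa using hr {Y})
  let I := {p : Finset (ConstantSumGame α) × (ConstantSumGame α → α) //
    (p.1 : Set (ConstantSumGame α)).PairwiseDisjoint p.2}
  let value (p : I) : ℝ := ∑ y ∈ p.1.1, y (p.1.2 y)
  have hbot (p : I) (hp : p.1.1.sup p.1.2 = ⊥) : value p - r p.1.1 ≤ 0 := by
    rw [Finset.sup_eq_bot_iff] at hp
    have hvalue : value p = 0 := Finset.sum_eq_zero fun y hy => by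
      rw [hp y hy, y.isCappedGame.apply_bot]
    linarith [hr₀ p.1.1]
  have hsum (s : Finset I) (hs : (s : Set I).PairwiseDisjoint fun p => p.1.1.sup p.1.2) :
      ∑ p ∈ s, (value p - r p.1.1) ≤ 1 := by
    let 𝒜 := s.image fun p => p.1.1
    have hvalue : ∑ p ∈ s, value p ≤ 1 + excess (𝒜.sup id) :=
      sum_sum_le_one_add_excess
        (fun p hp => Finset.le_sup (f := id) (Finset.mem_image_of_mem _ hp)) (fun p _ => p.2) hs
    have hcost : ∑ A ∈ 𝒜, r A ≤ ∑ p ∈ s, r p.1.1 := Finset.sum_image_le_of_nonneg fun Y _ => hr₀ Y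
    rw [Finset.sum_sub_distrib]
    linarith [hr 𝒜]
  exact (exists_forall_le hbot hsum).imp fun z hz Y E hE => hz ⟨(Y, E), hE⟩

theorem hyperconvex_diversity [Nontrivial α] : (diversity α).Hyperconvex := by
  intro r _ hr
  simp only [diversity_delta] at hr ⊢
  obtain ⟨z, hz⟩ := exists_forall_sum_sub_le hr
  refine ⟨z, fun Y => ?_⟩
  have hY : excess Y ≤ r Y := by simpa using hr {Y}
  by_cases hzY : z ∈ Y
  · rwa [Finset.insert_eq_of_mem hzY]
  refine excess_le ((excess_nonneg Y).trans hY) fun E hE => ?_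
  rw [Finset.coe_insert, Set.pairwiseDisjoint_insert_of_notMem (by simpa using hzY)] at hE
  have hdisj : Disjoint (E z) (Y.sup E) := Finset.disjoint_sup_right.2 fun y hy => hE.2 y hy
  rw [Finset.sum_insert hzY]
  linarith [hz Y E hE.1, z.isCappedGame.add_le_sup _ _ hdisj, z.isCappedGame.le_one (E z ⊔ Y.sup E)]

/-- The game on `α` obtained from a game on `β` by renaming coalitions along `e`. -/
def comap (e : α ≃o β) (x : ConstantSumGame β) : ConstantSumGame α where
  toFun a := x (e a)
  isCappedGame :=
    { nonneg := fun a => x.isCappedGame.nonneg (e a)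
      add_le_sup := fun a b hab => by
        rw [map_sup]
        exact x.isCappedGame.add_le_sup _ _ ((disjoint_map_orderIso_iff e).2 hab)
      le_one := fun a => x.isCappedGame.le_one (e a) }
  le_of_forall_disjoint a t ht := x.le_of_forall_disjoint _ _ fun b hb => by
    rw [← e.apply_symm_apply b] at hb ⊢
    exact ht _ ((disjoint_map_orderIso_iff e).1 hb)

theorem comap_injective (e : α ≃o β) : Function.Injective (comap e) := fun x y hxy => by
  ext b
  simpa [comap] using congrFun (congrArg toFun hxy) (e.symm b)

theorem excess_image_comap_le (e : α ≃o β) (F : Finset (ConstantSumGame β)) :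
    excess (F.image (comap e)) ≤ excess F := by
  refine excess_le (excess_nonneg F) fun E hE => ?_
  rw [Finset.sum_image (comap_injective e).injOn]
  refine sum_le_one_add_excess (E := fun x => e (E (comap e x))) fun x hx y hy hxy => ?_
  exact (disjoint_map_orderIso_iff e).2 (hE (Finset.mem_image_of_mem _ hx)
    (Finset.mem_image_of_mem _ hy) ((comap_injective e).ne hxy))

theorem comap_ne_self {e : α ≃o α} (he : ∀ a, ∃ n : ℕ, Disjoint a (e^[n] a))
    (x : ConstantSumGame α) : comap e x ≠ x := fun hfix => by
  have hinv (n : ℕ) (a : α) : x (e^[n] a) = x a :=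
    congrFun (Function.iterate_invariant (f := e) (congrArg toFun hfix) n) a
  have hhalf (a : α) : x a ≤ 1 / 2 := by
    obtain ⟨n, hn⟩ := he a
    have hadd := x.isCappedGame.add_le_sup _ _ hn
    rw [hinv] at hadd
    linarith [x.isCappedGame.le_one (a ⊔ e^[n] a)]
  have hbot : 1 / 2 ≤ x ⊥ := x.le_of_forall_disjoint ⊥ (1 / 2) fun b _ => by linarith [hhalf b]
  linarith [x.isCappedGame.apply_bot]

end ConstantSumGame

/-- The order automorphism `A ↦ A + 1` of the finite sets of integers. -/
def finsetShift : Finset ℤ ≃o Finset ℤ where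
  toEquiv := (Equiv.addRight (1 : ℤ)).finsetCongr
  map_rel_iff' := Finset.map_subset_map

theorem mem_iterate_finsetShift (n : ℕ) (A : Finset ℤ) (i : ℤ) :
    i ∈ finsetShift^[n] A ↔ i - n ∈ A := by
  induction n generalizing i with
  | zero => simp
  | succ n ih =>
    have hmem (B : Finset ℤ) : i ∈ finsetShift B ↔ i - 1 ∈ B := Finset.mem_map_equiv
    rw [Function.iterate_succ_apply', hmem, ih]
    push_cast
    rw [sub_sub, add_comm]

theorem exists_disjoint_iterate_finsetShift (A : Finset ℤ) :
    ∃ n : ℕ, Disjoint A (finsetShift^[n] A) := by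
  refine ⟨2 * A.sup Int.natAbs + 1, Finset.disjoint_left.2 fun i hi hshift => ?_⟩
  rw [mem_iterate_finsetShift] at hshift
  have hbound := Finset.le_sup (f := Int.natAbs) hi
  have hbound' := Finset.le_sup (f := Int.natAbs) hshift
  lia

/-- There exist a hyperconvex diversity `(X, δ)` whose induced metric
space `(X, d)`, `d(x,y) = δ {x,y}`, is bounded, and a map `T : X → X` which is
nonexpansive with respect to `d` but has no fixed point. -/
theorem exists_bounded_induced_metric_fixed_point_free_nonexpansive :
    ∃ (X : Type) (_ : DecidableEq X) (D : Diversity X) (T : X → X),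
      D.Hyperconvex ∧
      (∃ M : ℝ, ∀ x y : X, D.delta {x, y} ≤ M) ∧
      (∀ x y : X, D.delta {T x, T y} ≤ D.delta {x, y}) ∧
      ∀ x : X, T x ≠ x := by
  refine ⟨ConstantSumGame (Finset ℤ), inferInstance, ConstantSumGame.diversity (Finset ℤ),
    ConstantSumGame.comap finsetShift, ConstantSumGame.hyperconvex_diversity, ⟨1, fun x y => ?_⟩,
    fun x y => ?_, ConstantSumGame.comap_ne_self exists_disjoint_iterate_finsetShift⟩
  · refine (ConstantSumGame.excess_le_card_sub_one {x, y}).trans ?_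
    exact_mod_cast Nat.sub_le_of_le_add Finset.card_le_two
  · simpa only [ConstantSumGame.diversity_delta, Finset.image_insert, Finset.image_singleton]
      using ConstantSumGame.excess_image_comap_le finsetShift {x, y}
end
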